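/- Let (X,d) be an unbounded metric space with asdim(X,d) ≤ n. Then there exists a metric d_h on X, coarsely equivalent to d, such that: (i) the Nagata-Assouad dimension of (X,d_h) is at most n; (ii) for every basepoint x₀ ∈ X, defining the Gromov product (x|y) = ½(d_h(x,x₀) + d_h(y,x₀) − d_h(x,y)), one has (x|z) ≥ min((x|y),(y|z)) − 4 for all x, y, z ∈ X; and (iii) for any two sequences (x_i) and (y_i) in X such that (x_m|x_k) → ∞ as m,k → ∞ and (y_m|y_k) → ∞ as m,k → ∞, one has (x_m|y_m) → ∞ as m → ∞ (i.e. the Gromov boundary of (X,d_h) is a single point). -/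

import Mathlib

/-- `d` is a metric on `X`. -/
structure IsMetricOn {X : Type*} (d : X → X → ℝ) : Prop where
  refl : ∀ x, d x x = 0
  eq_of_eq_zero : ∀ x y, d x y = 0 → x = y
  symm : ∀ x y, d x y = d y x
  triangle : ∀ x y z, d x z ≤ d x y + d y z

/-- Nagata-Assouad dimension at most `n` for the distance function `d` on `X`. -/
def NagataDimWithLE {X : Type*} (d : X → X → ℝ) (n : ℕ) : Prop :=
  ∃ C : ℝ, 0 < C ∧ ∀ r : ℝ, 0 < r →
    ∃ U : Fin (n + 1) → Set (Set X),
      (∀ x : X, ∃ i, ∃ V ∈ U i, x ∈ V) ∧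
      (∀ i, ∀ V ∈ U i, ∀ W ∈ U i, V ≠ W → ∀ x ∈ V, ∀ y ∈ W, r < d x y) ∧
      (∀ i, ∀ V ∈ U i, ∀ x ∈ V, ∀ y ∈ V, d x y ≤ C * r)

/-- Asymptotic dimension at most `n` for the distance function `d` on `X`. -/
def AsdimWithLE {X : Type*} (d : X → X → ℝ) (n : ℕ) : Prop :=
  ∀ r : ℝ, 0 < r → ∃ D : ℝ, 0 < D ∧
    ∃ U : Fin (n + 1) → Set (Set X),
      (∀ x : X, ∃ i, ∃ V ∈ U i, x ∈ V) ∧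
      (∀ i, ∀ V ∈ U i, ∀ W ∈ U i, V ≠ W → ∀ x ∈ V, ∀ y ∈ W, r < d x y) ∧
      (∀ i, ∀ V ∈ U i, ∀ x ∈ V, ∀ y ∈ V, d x y ≤ D)

/-- Two distance functions on `X` are coarsely equivalent. -/
def CoarselyEquivalent {X : Type*} (d d' : X → X → ℝ) : Prop :=
  ∃ ρ₁ ρ₂ : ℝ → ℝ, Monotone ρ₁ ∧ Monotone ρ₂ ∧
    Filter.Tendsto ρ₁ Filter.atTop Filter.atTop ∧
    ∀ x y : X, ρ₁ (d x y) ≤ d' x y ∧ d' x y ≤ ρ₂ (d x y)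

/-- The Gromov product `(x|y)` with respect to the basepoint `x₀` and distance `d`. -/
noncomputable def gromovProd {X : Type*} (d : X → X → ℝ) (x₀ x y : X) : ℝ :=
  (d x x₀ + d y x₀ - d x y) / 2


/-- A rapidly growing sequence of scales and its integer-valued generalized inverse. -/
lemma exists_scales (D : ℝ → ℝ) (hD : ∀ r, 0 < r → 0 < D r) :
    ∃ (g : ℕ → ℝ) (N : ℝ → ℕ), (∀ k, 0 < g k) ∧ Monotone g ∧
      (∀ k, 2 * g k ≤ g (k + 1)) ∧ (∀ k, D (g k) ≤ g (k + 1)) ∧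
      (∀ t k, N t ≤ k ↔ t ≤ g k) := by
  obtain ⟨g, g0, gs⟩ : ∃ g : ℕ → ℝ, g 0 = 1 ∧ ∀ k, g (k + 1) = 2 * g k + D (g k) :=
    ⟨fun k => Nat.rec (motive := fun _ => ℝ) 1 (fun _ a => 2 * a + D a) k, rfl, fun _ => rfl⟩
  have gpos : ∀ k, 0 < g k := by
    intro k
    induction k with
    | zero => rw [g0]; exact one_pos
    | succ k ih => rw [gs]; have := hD _ ih; linarith
  have gmono : Monotone g := monotone_nat_of_le_succ fun k => by
    rw [gs]; have := hD _ (gpos k); have := gpos k; linarith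
  have glin : ∀ k : ℕ, (k : ℝ) + 1 ≤ g k := by
    intro k
    induction k with
    | zero => simp [g0]
    | succ k ih =>
      rw [gs]; have := hD _ (gpos k); push_cast
      have : (0 : ℝ) ≤ k := Nat.cast_nonneg k
      linarith
  have hex : ∀ t : ℝ, ∃ k, t ≤ g k := by
    intro t
    obtain ⟨k, hk⟩ := exists_nat_ge t
    exact ⟨k, by linarith [glin k]⟩
  have hex2 : ∀ t : ℝ, ∃ m : ℕ, ∀ k, m ≤ k ↔ t ≤ g k := by
    intro t
    classical
    exact ⟨Nat.find (hex t), fun k =>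
      ⟨fun hk => (Nat.find_spec (hex t)).trans (gmono hk), fun hk => Nat.find_min' (hex t) hk⟩⟩
  choose N hN using hex2
  refine ⟨g, N, gpos, gmono, ?_, ?_, hN⟩
  · intro k; rw [gs]; linarith [hD _ (gpos k)]
  · intro k; rw [gs]; linarith [gpos k]

/-- A coarsely ultrametric function satisfies the four-point condition. -/
lemma hyperbolic_of_quasi_ultra {X : Type*} (d : X → X → ℝ) (hs : ∀ x y, d x y = d y x)
    (hu : ∀ x y z, d x z ≤ max (d x y) (d y z) + 1) (x₀ x y z : X) :
    min (gromovProd d x₀ x y) (gromovProd d x₀ y z) - 4 ≤ gromovProd d x₀ x z := by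
  unfold gromovProd
  have s1 := hs x₀ x
  have s2 := hs x₀ y
  have s3 := hs x₀ z
  have s4 := hs y x
  have s5 := hs z y
  have s6 := hs z x
  have h1 := hu x y z
  have h2 := hu x x₀ z
  have h3 := hu y x x₀
  have h4 := hu y z x₀
  rw [s4] at h3
  rw [s3] at h2
  rw [sub_le_iff_le_add, min_le_iff]
  by_contra! hc
  obtain ⟨c1, c2⟩ := hc
  rcases max_cases (d x y) (d y z) with ⟨e1, _⟩ | ⟨e1, _⟩ <;>
  rcases max_cases (d x x₀) (d z x₀) with ⟨e2, _⟩ | ⟨e2, _⟩ <;>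
  rcases max_cases (d x y) (d x x₀) with ⟨e3, _⟩ | ⟨e3, _⟩ <;>
  rcases max_cases (d y z) (d z x₀) with ⟨e4, _⟩ | ⟨e4, _⟩ <;>
  rw [e1] at h1 <;> rw [e2] at h2 <;> rw [e3] at h3 <;> rw [e4] at h4 <;> linarith

theorem exists_hyperbolic_metric_of_asdim
    {X : Type*} [MetricSpace X] (hX : ¬ Bornology.IsBounded (Set.univ : Set X)) (n : ℕ)
    (h : AsdimWithLE (fun x y : X => dist x y) n) :
    ∃ dh : X → X → ℝ, IsMetricOn dh ∧
      CoarselyEquivalent (fun x y : X => dist x y) dh ∧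
      NagataDimWithLE dh n ∧
      (∀ x₀ x y z : X,
        min (gromovProd dh x₀ x y) (gromovProd dh x₀ y z) - 4 ≤ gromovProd dh x₀ x z) ∧
      (∀ x₀ : X, ∀ u v : ℕ → X,
        Filter.Tendsto (fun p : ℕ × ℕ => gromovProd dh x₀ (u p.1) (u p.2))
          Filter.atTop Filter.atTop →
        Filter.Tendsto (fun p : ℕ × ℕ => gromovProd dh x₀ (v p.1) (v p.2))
          Filter.atTop Filter.atTop →
        Filter.Tendsto (fun m : ℕ => gromovProd dh x₀ (u m) (v m))
          Filter.atTop Filter.atTop) := by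
  choose! D hD U hcov hdis hbd using h
  obtain ⟨g, N, gpos, gmono, g2, gD, hN⟩ := exists_scales D hD
  have Nmono : Monotone N := fun s t hst => (hN s _).2 (hst.trans ((hN t _).1 le_rfl))
  classical
  let dh : X → X → ℝ := fun x y => if x = y then 0 else (N (dist x y) : ℝ) + 1
  have dself : ∀ x, dh x x = 0 := fun x => if_pos rfl
  have dne : ∀ {x y}, x ≠ y → dh x y = (N (dist x y) : ℝ) + 1 := fun hxy => if_neg hxy
  have dnn : ∀ x y, 0 ≤ dh x y := by
    intro x y
    by_cases hxy : x = y
    · subst hxy; rw [dself]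
    · rw [dne hxy]; positivity
  have dsymm : ∀ x y, dh x y = dh y x := by
    intro x y
    by_cases hxy : x = y
    · subst hxy; rfl
    · rw [dne hxy, dne (Ne.symm hxy), dist_comm]
  have key : ∀ x y z : X, N (dist x z) ≤ max (N (dist x y)) (N (dist y z)) + 1 := by
    intro x y z
    rw [hN]
    have h1 := (hN (dist x y) (max (N (dist x y)) (N (dist y z)))).1 (le_max_left _ _)
    have h2 := (hN (dist y z) (max (N (dist x y)) (N (dist y z)))).1 (le_max_right _ _)
    have := g2 (max (N (dist x y)) (N (dist y z)))
    linarith [dist_triangle x y z]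
  have keyR : ∀ x y z : X,
      (N (dist x z) : ℝ) ≤ max (N (dist x y) : ℝ) (N (dist y z)) + 1 := by
    intro x y z
    exact_mod_cast key x y z
  have ultra : ∀ x y z, dh x z ≤ max (dh x y) (dh y z) + 1 := by
    intro x y z
    by_cases hxy : x = y
    · subst hxy; linarith [le_max_right (dh x x) (dh x z)]
    by_cases hyz : y = z
    · subst hyz; linarith [le_max_left (dh x y) (dh y y)]
    by_cases hxz : x = z
    · subst hxz; rw [dself]; linarith [le_max_left (dh x y) (dh y x), dnn x y]
    rw [dne hxy, dne hyz, dne hxz, max_add_add_right]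
    linarith [keyR x y z]
  have tri : ∀ x y z, dh x z ≤ dh x y + dh y z := by
    intro x y z
    by_cases hxy : x = y
    · subst hxy; rw [dself]; linarith
    by_cases hyz : y = z
    · subst hyz; rw [dself]; linarith
    have := ultra x y z
    have h1 : 1 ≤ dh x y := by
      rw [dne hxy]; linarith [Nat.cast_nonneg (α := ℝ) (N (dist x y))]
    have h2 : 1 ≤ dh y z := by
      rw [dne hyz]; linarith [Nat.cast_nonneg (α := ℝ) (N (dist y z))]
    rcases max_cases (dh x y) (dh y z) with ⟨e, _⟩ | ⟨e, _⟩ <;> rw [e] at this <;> linarith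
  have N0 : N 0 = 0 := Nat.le_zero.1 ((hN 0 0).2 (gpos 0).le)
  refine ⟨dh, ⟨dself, ?_, dsymm, tri⟩, ?_, ?_, ?_, ?_⟩
  · intro x y hxy
    by_contra hne
    rw [dne hne] at hxy
    linarith [Nat.cast_nonneg (α := ℝ) (N (dist x y))]
  · refine ⟨fun t => N t, fun t => (N t : ℝ) + 1, fun s t hst => ?_, fun s t hst => ?_, ?_, ?_⟩
    · exact Nat.cast_le.2 (Nmono hst)
    · have : (N s : ℝ) ≤ N t := by exact_mod_cast Nmono hst
      simpa using this
    · refine tendsto_natCast_atTop_atTop.comp ?_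
      refine Filter.tendsto_atTop_atTop.2 fun m => ⟨g m + 1, fun t ht => ?_⟩
      by_contra hlt
      have := (hN t m).1 (by omega)
      linarith
    · intro x y
      by_cases hxy : x = y
      · subst hxy
        simp [dself, N0]
      · rw [dne hxy]
        exact ⟨by simp, le_rfl⟩
  · refine ⟨2, two_pos, fun r hr => ?_⟩
    rcases lt_or_ge r 1 with hr1 | hr1
    · refine ⟨fun _ => Set.range fun x : X => ({x} : Set X), ?_, ?_, ?_⟩
      · intro x
        exact ⟨0, {x}, ⟨x, rfl⟩, rfl⟩
      · rintro _ _ ⟨a, rfl⟩ _ ⟨b, rfl⟩ hab x rfl y rfl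
        have hne : x ≠ y := fun e => hab (by rw [e])
        rw [dne hne]
        linarith [Nat.cast_nonneg (α := ℝ) (N (dist x y))]
      · rintro _ _ ⟨a, rfl⟩ x rfl y hy
        rw [Set.mem_singleton_iff.1 hy, dself]
        positivity
    · obtain ⟨m, hm⟩ : ∃ m, ⌊r⌋₊ = m + 1 :=
        Nat.exists_eq_add_one.2 (Nat.floor_pos.2 hr1)
      have hmr : (m : ℝ) + 1 ≤ r := by
        have := Nat.floor_le hr.le
        rw [hm] at this
        exact_mod_cast this
      have hrm : r < (m : ℝ) + 1 + 1 := by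
        have := Nat.lt_floor_add_one r
        rw [hm] at this
        exact_mod_cast this
      refine ⟨U (g m), hcov _ (gpos m), ?_, ?_⟩
      · intro i V hV W hW hVW x hx y hy
        have hd : g m < dist x y := hdis _ (gpos m) i V hV W hW hVW x hx y hy
        have hne : x ≠ y := by
          rintro rfl
          rw [dist_self] at hd
          linarith [gpos m]
        have hNm : m + 1 ≤ N (dist x y) := by
          by_contra hlt
          have := (hN (dist x y) m).1 (by omega)
          linarith
        have : (m : ℝ) + 1 ≤ N (dist x y) := by exact_mod_cast hNm
        rw [dne hne]
        linarith
      · intro i V hV x hx y hy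
        have hd : dist x y ≤ D (g m) := hbd _ (gpos m) i V hV x hx y hy
        by_cases hxy : x = y
        · subst hxy; rw [dself]; positivity
        · have h1 : N (dist x y) ≤ m + 1 := (hN _ _).2 (hd.trans (gD m))
          have : (N (dist x y) : ℝ) ≤ m + 1 := by exact_mod_cast h1
          rw [dne hxy]
          linarith
  · exact hyperbolic_of_quasi_ultra dh dsymm ultra
  · intro x₀ u v hu hv
    have diag : ∀ w : ℕ → X,
        Filter.Tendsto (fun p : ℕ × ℕ => gromovProd dh x₀ (w p.1) (w p.2))
          Filter.atTop Filter.atTop →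
        Filter.Tendsto (fun m => dh (w m) x₀) Filter.atTop Filter.atTop := by
      intro w hw
      have hdg : Filter.Tendsto (fun m : ℕ => (m, m)) Filter.atTop Filter.atTop :=
        Filter.tendsto_atTop_diagonal
      refine (hw.comp hdg).congr fun m => ?_
      simp [gromovProd, dself]
    have hu' := diag u hu
    have hv' := diag v hv
    rw [Filter.tendsto_atTop] at hu' hv' ⊢
    intro b
    filter_upwards [hu' (2 * b + 1), hv' (2 * b + 1)] with m h1 h2
    have := ultra (u m) x₀ (v m)
    rw [dsymm x₀ (v m)] at this
    unfold gromovProd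
    rcases max_cases (dh (u m) x₀) (dh (v m) x₀) with ⟨e, _⟩ | ⟨e, _⟩ <;>
      rw [e] at this <;> linarith
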